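/- Let s be a complex number with Re(s) > 1/2 and let κ > 0 be real. Then (2s−1) ∫_{−∞}^{∞} g_s( (1 + t²) (1 + κ)²/(4κ) ) dt = max(κ, κ^{-1})^{1/2 − s} / (κ^{1/2} + κ^{-1/2}). -/

import Mathlib

open MeasureTheory

/-- The Green's function of the resolvent `(Δ_ℍ - s(1-s))⁻¹` on the hyperbolic plane,
expressed in the point-pair invariant `σ = cosh²(d(z,z')/2)`, via Euler's integral
representation: `g_s(σ) = (1/(4π)) ∫₀¹ t^(s-1) (1-t)^(s-1) (σ-t)^(-s) dt`. -/
noncomputable def greenH (s : ℂ) (σ : ℝ) : ℂ :=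
  (1 / (4 * (Real.pi : ℂ))) * ∫ t in Set.Ioo (0:ℝ) 1,
    (t : ℂ) ^ (s - 1) * ((1 : ℂ) - (t : ℂ)) ^ (s - 1) * ((σ : ℂ) - (t : ℂ)) ^ (-s)

lemma cpow_pos_eq (a : ℝ) (ha : 0 < a) (z : ℂ) : (a : ℂ) ^ z = Complex.exp ((Real.log a : ℂ) * z) := by
  rw [Complex.cpow_def_of_ne_zero (by exact_mod_cast ha.ne'), Complex.ofReal_log ha.le]

lemma beta_set (a b : ℂ) : Complex.betaIntegral a b =
    ∫ t in Set.Ioo (0:ℝ) 1, (t : ℂ) ^ (a - 1) * ((1 : ℂ) - (t : ℂ)) ^ (b - 1) := by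
  rw [Complex.betaIntegral, intervalIntegral.integral_of_le zero_le_one, integral_Ioc_eq_integral_Ioo]

lemma beta_intble (a b : ℂ) (ha : 0 < a.re) (hb : 0 < b.re) :
    IntegrableOn (fun t : ℝ => (t : ℂ) ^ (a - 1) * ((1 : ℂ) - (t : ℂ)) ^ (b - 1)) (Set.Ioo (0:ℝ) 1) := by
  have := Complex.betaIntegral_convergent ha hb
  rw [intervalIntegrable_iff_integrableOn_Ioo_of_le zero_le_one] at this
  exact this

lemma inner_scale (s : ℂ) (a A : ℝ) (ha : 0 < a) (hA : 0 < A) :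
    ∫ t : ℝ, ((a + A * t ^ 2 : ℝ) : ℂ) ^ (-s) =
      (a : ℂ) ^ (1 / 2 - s) * ((Real.sqrt A)⁻¹ : ℝ) * ∫ t : ℝ, ((1 + t ^ 2 : ℝ) : ℂ) ^ (-s) := by
  have h1 : ∀ t : ℝ, ((a + A * t ^ 2 : ℝ) : ℂ) ^ (-s) =
      (a : ℂ) ^ (-s) * ((1 + (t * Real.sqrt (A / a)) ^ 2 : ℝ) : ℂ) ^ (-s) := by
    intro t
    rw [← Complex.mul_cpow_ofReal_nonneg ha.le (by positivity), ← Complex.ofReal_mul]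
    congr 2
    rw [mul_pow, Real.sq_sqrt (by positivity)]
    field_simp
  simp_rw [h1]
  rw [integral_const_mul,
    Measure.integral_comp_mul_right (fun t : ℝ => ((1 + t ^ 2 : ℝ) : ℂ) ^ (-s)),
    abs_of_pos (by positivity), Real.sqrt_div hA.le, Complex.real_smul, ← mul_assoc]
  congr 1
  have : (a : ℂ) ^ (1 / 2 - s) = (a : ℂ) ^ (-s) * (Real.sqrt a : ℝ) := by
    rw [Real.sqrt_eq_rpow, Complex.ofReal_cpow ha.le, ← Complex.cpow_add _ _ (by exact_mod_cast ha.ne')]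
    congr 1; push_cast; ring
  rw [this, inv_div, div_eq_mul_inv]; push_cast; ring

lemma inner_scale_real (σ a A : ℝ) (ha : 0 < a) (hA : 0 < A) :
    ∫ t : ℝ, (a + A * t ^ 2) ^ (-σ) =
      a ^ (1 / 2 - σ) * (Real.sqrt A)⁻¹ * ∫ t : ℝ, (1 + t ^ 2) ^ (-σ) := by
  have h1 : ∀ t : ℝ, (a + A * t ^ 2) ^ (-σ) =
      a ^ (-σ) * (1 + (t * Real.sqrt (A / a)) ^ 2) ^ (-σ) := by
    intro t
    rw [← Real.mul_rpow ha.le (by positivity)]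
    congr 1
    rw [mul_pow, Real.sq_sqrt (by positivity)]
    field_simp
  simp_rw [h1]
  rw [integral_const_mul,
    Measure.integral_comp_mul_right (fun t : ℝ => (1 + t ^ 2) ^ (-σ)),
    abs_of_pos (by positivity), Real.sqrt_div hA.le, smul_eq_mul, ← mul_assoc]
  congr 1
  have : a ^ (1 / 2 - σ) = a ^ (-σ) * Real.sqrt a := by
    rw [Real.sqrt_eq_rpow, ← Real.rpow_add ha]
    congr 1; ring
  rw [this, inv_div, div_eq_mul_inv]; ring

lemma inner_intble_real (σ a A : ℝ) (hσ : 1 / 2 < σ) (ha : 0 < a) (hA : 0 < A) :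
    Integrable (fun t : ℝ => (a + A * t ^ 2) ^ (-σ)) := by
  have h0 : Integrable (fun t : ℝ => (1 + t ^ 2) ^ (-σ)) := by
    have := integrable_rpow_neg_one_add_norm_sq (E := ℝ) (μ := volume) (r := 2 * σ)
      (by simp; linarith)
    convert this using 2 with t
    rw [Real.norm_eq_abs, sq_abs]; congr 1; ring
  have h1 : ∀ t : ℝ, (a + A * t ^ 2) ^ (-σ) =
      a ^ (-σ) * (1 + (t * Real.sqrt (A / a)) ^ 2) ^ (-σ) := by
    intro t
    rw [← Real.mul_rpow ha.le (by positivity)]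
    congr 1
    rw [mul_pow, Real.sq_sqrt (by positivity)]
    field_simp
  simp_rw [h1]
  exact (h0.comp_mul_right' (by positivity)).const_mul _

lemma C_eq (s : ℂ) : ∫ t : ℝ, ((1 + t ^ 2 : ℝ) : ℂ) ^ (-s) =
    (4 : ℂ) ^ (s - 1) * Complex.betaIntegral (s - 1 / 2) (s - 1 / 2) := by
  set f : ℝ → ℝ := fun y => (1 + y / Real.sqrt (1 + y ^ 2)) / 2 with hf
  have hw : ∀ y : ℝ, 0 < Real.sqrt (1 + y ^ 2) := fun y => by positivity
  have hw2 : ∀ y : ℝ, Real.sqrt (1 + y ^ 2) ^ 2 = 1 + y ^ 2 := fun y => Real.sq_sqrt (by positivity)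
  have hd : ∀ y : ℝ, HasDerivAt f (1 / (2 * Real.sqrt (1 + y ^ 2) ^ 3)) y := by
    intro y
    have h1 : HasDerivAt (fun y : ℝ => Real.sqrt (1 + y ^ 2)) ((2 * y) / (2 * Real.sqrt (1 + y ^ 2))) y := by
      have : HasDerivAt (fun y : ℝ => 1 + y ^ 2) (2 * y) y := by
        simpa using (hasDerivAt_pow 2 y).const_add 1
      exact this.sqrt (by positivity)
    have h2 := (((hasDerivAt_id y).div h1 (hw y).ne').const_add 1).div_const 2
    refine h2.congr_deriv ?_
    have := hw y
    have := hw2 y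
    simp only [id]
    field_simp
    linear_combination this
  have hinj : Function.Injective f :=
    (strictMono_of_hasDerivAt_pos hd (fun y => by have := hw y; positivity)).injective
  have him : f '' Set.univ = Set.Ioo 0 1 := by
    ext v
    simp only [Set.image_univ, Set.mem_range, Set.mem_Ioo]
    constructor
    · rintro ⟨y, rfl⟩
      have h3 : |y| < Real.sqrt (1 + y ^ 2) := by
        rw [← Real.sqrt_sq_eq_abs]; exact Real.sqrt_lt_sqrt (by positivity) (by linarith)
      have h4 := abs_lt.1 h3
      have h5 : -1 < y / Real.sqrt (1 + y ^ 2) := by rw [lt_div_iff₀ (hw y)]; linarith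
      have h6 : y / Real.sqrt (1 + y ^ 2) < 1 := by rw [div_lt_iff₀ (hw y)]; linarith
      simp only [hf]
      constructor <;> linarith
    · rintro ⟨h0, h1⟩
      have hq : 0 < 4 * v * (1 - v) := by nlinarith
      refine ⟨(2 * v - 1) / Real.sqrt (4 * v * (1 - v)), ?_⟩
      have e : 1 + ((2 * v - 1) / Real.sqrt (4 * v * (1 - v))) ^ 2 = (1 / Real.sqrt (4 * v * (1 - v))) ^ 2 := by
        rw [div_pow, div_pow, Real.sq_sqrt hq.le]; field_simp; ring
      simp only [hf]
      rw [e, Real.sqrt_sq (by positivity)]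
      have := Real.sqrt_pos.2 hq
      field_simp
      ring
  rw [beta_set, ← him, integral_image_eq_integral_abs_deriv_smul MeasurableSet.univ
    (fun y _ => (hd y).hasDerivWithinAt) hinj.injOn, setIntegral_univ, ← integral_const_mul]
  congr 1; ext y
  have hy := hw y
  have hf0 : f y ∈ Set.Ioo (0:ℝ) 1 := him ▸ Set.mem_image_of_mem f (Set.mem_univ y)
  have hm : f y * (1 - f y) = 1 / (4 * Real.sqrt (1 + y ^ 2) ^ 2) := by
    have := hw2 y
    simp only [hf]; field_simp; linear_combination 4 * this
  rw [abs_of_pos (by positivity), Complex.real_smul, ← Complex.ofReal_one, ← Complex.ofReal_sub,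
    ← Complex.mul_cpow_ofReal_nonneg hf0.1.le (by linarith [hf0.2]), ← Complex.ofReal_mul, hm]
  have hwy := hw2 y
  set w := Real.sqrt (1 + y ^ 2)
  rw [← hwy]
  have e1 : ((1 / (2 * w ^ 3) : ℝ) : ℂ) = ((1 / (2 * w ^ 3) : ℝ) : ℂ) ^ (1 : ℂ) := by simp
  rw [e1, show (4 : ℂ) = ((4 : ℝ) : ℂ) by simp]
  rw [cpow_pos_eq _ (by positivity), cpow_pos_eq _ (by positivity), cpow_pos_eq _ (by positivity),
    cpow_pos_eq _ (by positivity), ← Complex.exp_add, ← Complex.exp_add]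
  congr 1
  rw [Real.log_div (by positivity) (by positivity), Real.log_div (by positivity) (by positivity),
    Real.log_mul (by positivity) (by positivity), Real.log_mul (by positivity) (by positivity),
    show (4:ℝ) = 2 ^ 2 by norm_num]
  simp only [Real.log_pow, Real.log_one]
  push_cast
  ring

lemma odd_zero (s : ℂ) (q : ℝ → ℝ) (hq : ∀ v, q (1 - v) = - q v) :
    ∫ v in Set.Ioo (0:ℝ) 1, ((v : ℂ) ^ (s - 1) * ((1 : ℂ) - (v : ℂ)) ^ (s - 1)) * (q v : ℂ) = 0 := by
  rw [← integral_Ioc_eq_integral_Ioo, ← intervalIntegral.integral_of_le zero_le_one]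
  set h : ℝ → ℂ := fun v => ((v : ℂ) ^ (s - 1) * ((1 : ℂ) - (v : ℂ)) ^ (s - 1)) * (q v : ℂ) with hh
  have h1 := intervalIntegral.integral_comp_sub_left (a := 0) (b := 1) h 1
  have h2 : ∀ v, h (1 - v) = - h v := by
    intro v
    simp only [hh, hq]
    push_cast
    rw [sub_sub_cancel]
    ring
  simp only [h2, intervalIntegral.integral_neg, sub_self, sub_zero] at h1
  have : ∫ v in (0:ℝ)..1, h v = 0 := by
    have h3 : (2:ℂ) * ∫ v in (0:ℝ)..1, h v = 0 := by linear_combination -h1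
    simpa using h3
  exact this

lemma J_eq (s : ℂ) (hs : 0 < s.re) (x : ℝ) (hx : 0 < x) (hx1 : x < 1) :
    ∫ u in Set.Ioo (0:ℝ) 1, ((u : ℂ) ^ (s - 1) * ((1 : ℂ) - (u : ℂ)) ^ (s - 1)) *
      (((1 + x) ^ 2 / (4 * x) - u : ℝ) : ℂ) ^ (1 / 2 - s) =
    ((4 * x : ℝ) : ℂ) ^ (s - 1 / 2) * Complex.betaIntegral s s := by
  set D : ℝ → ℝ := fun v => Real.sqrt (1 - x ^ 2 + x ^ 2 * (2 * v - 1) ^ 2) with hD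
  have hpos : ∀ v : ℝ, 0 < 1 - x ^ 2 + x ^ 2 * (2 * v - 1) ^ 2 := fun v => by
    have : 0 < 1 - x ^ 2 := by nlinarith
    positivity
  have hD0 : ∀ v, 0 < D v := fun v => Real.sqrt_pos.2 (hpos v)
  have hD2 : ∀ v, D v ^ 2 = 1 - x ^ 2 + x ^ 2 * (2 * v - 1) ^ 2 := fun v => Real.sq_sqrt (hpos v).le
  have hDabs : ∀ v, |x * (2 * v - 1)| < D v := fun v => by
    apply abs_lt_of_sq_lt_sq _ (hD0 v).le
    rw [hD2]; nlinarith
  set r : ℝ → ℝ := fun v => D v - x * (2 * v - 1) with hr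
  have hr0 : ∀ v, 0 < r v := fun v => by
    have := (abs_lt.1 (hDabs v)).2
    simp only [hr]; linarith
  set f : ℝ → ℝ := fun v => (1 + (x + r v * (2 * v - 1))) / 2 with hf
  have hDd : ∀ v, HasDerivAt D (2 * x ^ 2 * (2 * v - 1) / D v) v := by
    intro v
    have h1 : HasDerivAt (fun v : ℝ => 1 - x ^ 2 + x ^ 2 * (2 * v - 1) ^ 2)
        (x ^ 2 * (2 * (2 * v - 1) * 2)) v := by
      have h2 : HasDerivAt (fun v : ℝ => 2 * v - 1) 2 v := by
        simpa using ((hasDerivAt_id v).const_mul 2).sub_const 1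
      simpa using ((h2.pow 2).const_mul (x ^ 2)).const_add (1 - x ^ 2)
    refine (h1.sqrt (hpos v).ne').congr_deriv ?_
    change _ / (2 * D v) = _
    have := hD0 v
    field_simp
  have hd : ∀ v, HasDerivAt f (r v ^ 2 / D v) v := by
    intro v
    have h2 : HasDerivAt (fun v : ℝ => 2 * v - 1) 2 v := by
      simpa using ((hasDerivAt_id v).const_mul 2).sub_const 1
    have h3 := ((((hDd v).sub (h2.const_mul x)).mul h2).const_add x |>.const_add 1).div_const 2
    refine h3.congr_deriv ?_
    have := hD0 v
    simp only [hr, Pi.sub_apply]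
    field_simp
    ring
  have hmono : StrictMono f :=
    strictMono_of_hasDerivAt_pos hd (fun v => by have := hr0 v; have := hD0 v; positivity)
  have hf0 : f 0 = 0 := by
    have : D 0 = 1 := by simp [hD]
    simp only [hf, hr, this]; ring
  have hf1 : f 1 = 1 := by
    have : D 1 = 1 := by norm_num [hD]
    simp only [hf, hr, this]; ring
  have hcont : Continuous f := continuous_iff_continuousAt.2 fun v => (hd v).continuousAt
  have hDcont : Continuous D := continuous_iff_continuousAt.2 fun v => (hDd v).continuousAt
  have him : f '' Set.Ioo 0 1 = Set.Ioo 0 1 := by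
    apply Set.Subset.antisymm
    · rintro _ ⟨v, hv, rfl⟩
      exact ⟨hf0 ▸ hmono hv.1, hf1 ▸ hmono hv.2⟩
    · have := intermediate_value_Ioo (zero_le_one' ℝ) hcont.continuousOn
      rwa [hf0, hf1] at this
  have key : ∀ v ∈ Set.Ioo (0:ℝ) 1, |r v ^ 2 / D v| • (((f v : ℂ) ^ (s - 1) * ((1 : ℂ) - (f v : ℂ)) ^ (s - 1)) *
      (((1 + x) ^ 2 / (4 * x) - f v : ℝ) : ℂ) ^ (1 / 2 - s)) =
      ((4 * x : ℝ) : ℂ) ^ (s - 1 / 2) * (((v : ℂ) ^ (s - 1) * ((1 : ℂ) - (v : ℂ)) ^ (s - 1)) -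
        ((v : ℂ) ^ (s - 1) * ((1 : ℂ) - (v : ℂ)) ^ (s - 1)) * ((x * (2 * v - 1) / D v : ℝ) : ℂ)) := by
    intro v hv
    have hfv : f v ∈ Set.Ioo (0:ℝ) 1 := him ▸ Set.mem_image_of_mem f hv
    have hr' := hr0 v
    have hD' := hD0 v
    have e1 : f v * (1 - f v) = r v ^ 2 * (v * (1 - v)) := by
      have := hD2 v
      simp only [hf, hr]
      linear_combination (-1 / 4) * this
    have e2 : (1 + x) ^ 2 / (4 * x) - f v = r v ^ 2 / (4 * x) := by
      have := hD2 v
      simp only [hf, hr]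
      field_simp
      linear_combination (-2 : ℝ) * this
    have e3 : x * (2 * v - 1) / D v = 1 - r v / D v := by
      simp only [hr]; field_simp; ring
    have hv1 : 0 < 1 - v := by linarith [hv.2]
    have hv0 := hv.1
    have e4 : r v ^ 2 / D v = r v * (r v / D v) := by ring
    rw [e2, e3, abs_of_pos (by positivity), Complex.real_smul, ← Complex.ofReal_one, ← Complex.ofReal_sub,
      ← Complex.mul_cpow_ofReal_nonneg hfv.1.le (by linarith [hfv.2]), ← Complex.ofReal_mul, e1, e4,
      ← Complex.ofReal_sub,
      ← Complex.mul_cpow_ofReal_nonneg hv.1.le hv1.le, ← Complex.ofReal_mul, Complex.ofReal_mul (r v) (r v / D v)]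
    have e5 : (r v : ℂ) * ((r v ^ 2 * (v * (1 - v)) : ℝ) : ℂ) ^ (s - (1:ℝ)) *
        ((r v ^ 2 / (4 * x) : ℝ) : ℂ) ^ (((1:ℝ):ℂ) / 2 - s) =
        ((4 * x : ℝ) : ℂ) ^ (s - (1:ℝ) / 2) * ((v * (1 - v) : ℝ) : ℂ) ^ (s - (1:ℝ)) := by
      have e6 : (r v : ℂ) = (r v : ℂ) ^ (1 : ℂ) := by simp
      nth_rewrite 1 [e6]
      rw [cpow_pos_eq _ (by positivity), cpow_pos_eq _ (by positivity), cpow_pos_eq _ (by positivity),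
        cpow_pos_eq _ (by positivity), cpow_pos_eq _ (by positivity), ← Complex.exp_add,
        ← Complex.exp_add, ← Complex.exp_add]
      congr 1
      rw [Real.log_div (by positivity) (by positivity),
        Real.log_mul (x := r v ^ 2) (by positivity) (by positivity)]
      simp only [Real.log_pow]
      push_cast
      ring
    push_cast at e5 ⊢
    linear_combination ((r v : ℂ) / (D v : ℂ)) * e5
  have hbeta := beta_intble s s hs hs
  have hbetaq : IntegrableOn (fun v : ℝ => ((v : ℂ) ^ (s - 1) * ((1 : ℂ) - (v : ℂ)) ^ (s - 1)) *
      ((x * (2 * v - 1) / D v : ℝ) : ℂ)) (Set.Ioo (0:ℝ) 1) := by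
    refine Integrable.mul_bdd (c := 1) hbeta ?_ ?_
    · apply Continuous.aestronglyMeasurable
      apply Complex.continuous_ofReal.comp
      exact Continuous.div (by fun_prop) hDcont (fun v => (hD0 v).ne')
    · refine Filter.Eventually.of_forall fun v => ?_
      rw [Complex.norm_real, Real.norm_eq_abs, abs_div, abs_of_pos (hD0 v), div_le_one (hD0 v)]
      exact (hDabs v).le
  nth_rewrite 1 [← him]
  rw [integral_image_eq_integral_abs_deriv_smul measurableSet_Ioo
    (fun y _ => (hd y).hasDerivWithinAt) hmono.injective.injOn, setIntegral_congr_fun measurableSet_Ioo key,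
    integral_const_mul, integral_sub hbeta hbetaq, odd_zero, sub_zero, beta_set]
  intro v
  have : D (1 - v) = D v := by simp only [hD]; congr 1; ring
  simp only [this]; ring

lemma J_one (s : ℂ) (hs : 0 < s.re) :
    Complex.betaIntegral s (1 / 2) = (4 : ℂ) ^ (s - 1 / 2) * Complex.betaIntegral s s := by
  have h1 := Complex.Gamma_mul_Gamma_eq_betaIntegral hs (t := 1 / 2) (by norm_num)
  have h2 := Complex.Gamma_mul_Gamma_eq_betaIntegral hs hs
  have h3 := Complex.Gamma_mul_Gamma_add_half s
  have n1 : Complex.Gamma s ≠ 0 := Complex.Gamma_ne_zero_of_re_pos hs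
  have n2 : Complex.Gamma (s + 1 / 2) ≠ 0 :=
    Complex.Gamma_ne_zero_of_re_pos (by norm_num; linarith)
  have n3 : Complex.Gamma (2 * s) ≠ 0 := Complex.Gamma_ne_zero_of_re_pos (by simpa using hs)
  rw [← two_mul] at h2
  have hpi : ((Real.sqrt Real.pi : ℝ) : ℂ) = Complex.Gamma (1 / 2) := by
    rw [Complex.Gamma_one_half_eq, Real.sqrt_eq_rpow, Complex.ofReal_cpow Real.pi_pos.le]; norm_num
  rw [hpi] at h3
  have h4 : (4 : ℂ) ^ (s - 1 / 2) * (2 : ℂ) ^ (1 - 2 * s) = 1 := by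
    rw [show (4 : ℂ) = ((4 : ℝ) : ℂ) by simp, show (2 : ℂ) ^ (1 - 2 * s) = ((2 : ℝ) : ℂ) ^ (1 - 2 * s) by simp,
      cpow_pos_eq _ (by positivity), cpow_pos_eq _ (by positivity), ← Complex.exp_add,
      show (4:ℝ) = 2 ^ 2 by norm_num, Real.log_pow, ← Complex.exp_zero]
    congr 1; push_cast; ring
  have : Complex.Gamma (2 * s) * Complex.Gamma (s + 1 / 2) * Complex.betaIntegral s (1 / 2) =
      Complex.Gamma (2 * s) * Complex.Gamma (s + 1 / 2) *
        ((4 : ℂ) ^ (s - 1 / 2) * Complex.betaIntegral s s) := by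
    linear_combination (-Complex.Gamma (2 * s)) * h1
      + (4 : ℂ) ^ (s - 1 / 2) * Complex.Gamma (s + 1 / 2) * h2
      - (4 : ℂ) ^ (s - 1 / 2) * Complex.Gamma s * h3
      - Complex.Gamma s * Complex.Gamma (2 * s) * Complex.Gamma (1 / 2) * h4
  exact mul_left_cancel₀ (mul_ne_zero n3 n2) this

lemma J_all (s : ℂ) (hs : 0 < s.re) (x : ℝ) (hx : 0 < x) (hx1 : x ≤ 1) :
    ∫ u in Set.Ioo (0:ℝ) 1, ((u : ℂ) ^ (s - 1) * ((1 : ℂ) - (u : ℂ)) ^ (s - 1)) *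
      (((1 + x) ^ 2 / (4 * x) - u : ℝ) : ℂ) ^ (1 / 2 - s) =
    ((4 * x : ℝ) : ℂ) ^ (s - 1 / 2) * Complex.betaIntegral s s := by
  rcases hx1.lt_or_eq with h | rfl
  · exact J_eq s hs x hx h
  · have e : ((4 * 1 : ℝ) : ℂ) = 4 := by norm_num
    rw [e, ← J_one s hs, beta_set]
    refine setIntegral_congr_fun measurableSet_Ioo fun u hu => ?_
    have hu1 : (1 : ℂ) - (u : ℂ) ≠ 0 := by
      have : (1:ℝ) - u ≠ 0 := by linarith [hu.2]
      exact_mod_cast this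
    have e2 : (((1 + 1) ^ 2 / (4 * 1) - u : ℝ) : ℂ) = 1 - (u : ℂ) := by norm_num
    simp only [e2]
    rw [mul_assoc, ← Complex.cpow_add _ _ hu1]
    congr 2; ring

lemma const_eq (s : ℂ) (hs : 1 / 2 < s.re) :
    (2 * s - 1) * (1 / (4 * (Real.pi : ℂ)) * (((4 : ℂ) ^ (s - 1) *
      Complex.betaIntegral (s - 1 / 2) (s - 1 / 2)) *
      ((4 : ℂ) ^ (s - 1 / 2) * Complex.betaIntegral s s))) = 1 / 2 := by
  have hs' : 0 < (s - 1 / 2).re := by norm_num; linarith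
  have hs0 : 0 < s.re := by linarith
  have h1 := Complex.Gamma_mul_Gamma_eq_betaIntegral hs' hs'
  have h2 := Complex.Gamma_mul_Gamma_eq_betaIntegral hs0 hs0
  have h3 := Complex.Gamma_mul_Gamma_add_half (s - 1 / 2)
  have n2 : Complex.Gamma (2 * s - 1) ≠ 0 :=
    Complex.Gamma_ne_zero_of_re_pos (by norm_num; linarith)
  have n3 : (2 * s - 1) ≠ 0 := fun h => by
    have := congrArg Complex.re h
    norm_num at this; linarith
  have h5 := Complex.Gamma_add_one _ n3
  rw [← two_mul] at h2
  rw [← two_mul, show 2 * (s - 1 / 2) = 2 * s - 1 by ring] at h1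
  rw [show 2 * (s - 1 / 2) = 2 * s - 1 by ring, sub_add_cancel] at h3
  rw [sub_add_cancel] at h5
  have hpi : ((Real.sqrt Real.pi : ℝ) : ℂ) ^ 2 = Real.pi := by
    rw [← Complex.ofReal_pow, Real.sq_sqrt Real.pi_pos.le]
  have hpi0 : (Real.pi : ℂ) ≠ 0 := by exact_mod_cast Real.pi_ne_zero
  have h4 : (4 : ℂ) ^ (s - 1) * (4 : ℂ) ^ (s - 1 / 2) * ((2 : ℂ) ^ (1 - (2 * s - 1))) ^ 2 = 2 := by
    have e1 : (2 : ℂ) = Complex.exp ((Real.log 2 : ℂ) * 1) := by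
      rw [← cpow_pos_eq 2 (by norm_num)]; simp
    rw [show (4 : ℂ) = ((4 : ℝ) : ℂ) by simp,
      show (2 : ℂ) ^ (1 - (2 * s - 1)) = ((2 : ℝ) : ℂ) ^ (1 - (2 * s - 1)) by simp,
      cpow_pos_eq _ (by positivity), cpow_pos_eq _ (by positivity), cpow_pos_eq _ (by positivity),
      sq, ← Complex.exp_add, ← Complex.exp_add, ← Complex.exp_add,
      show (4:ℝ) = 2 ^ 2 by norm_num, Real.log_pow]
    refine Eq.trans ?_ e1.symm
    congr 1; push_cast; ring
  rw [h5] at h2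
  set X := Complex.betaIntegral (s - 1 / 2) (s - 1 / 2)
  set Y := Complex.betaIntegral s s
  set G := Complex.Gamma (2 * s - 1)
  set P := (2 : ℂ) ^ (1 - (2 * s - 1))
  set a := (4 : ℂ) ^ (s - 1)
  set b := (4 : ℂ) ^ (s - 1 / 2)
  have h6 : (2 * s - 1) * (X * Y) = P ^ 2 * Real.pi := by
    apply mul_left_cancel₀ (pow_ne_zero 2 n2)
    have : (Complex.Gamma (s - 1 / 2) * Complex.Gamma s) ^ 2 = (G * P * (Real.sqrt Real.pi : ℝ)) ^ 2 := by rw [h3]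
    linear_combination (-(Complex.Gamma s) ^ 2) * h1 - G * X * h2 + this + G ^ 2 * P ^ 2 * hpi
  field_simp
  linear_combination 2 * a * b * h6 + 2 * (Real.pi : ℂ) * h4

lemma fubini_intble (s : ℂ) (hs : 1 / 2 < s.re) (A : ℝ) (hA : 1 ≤ A) :
    Integrable (Function.uncurry fun (t u : ℝ) => ((u : ℂ) ^ (s - 1) * ((1 : ℂ) - (u : ℂ)) ^ (s - 1)) *
      ((A - u + A * t ^ 2 : ℝ) : ℂ) ^ (-s)) (volume.prod (volume.restrict (Set.Ioo (0:ℝ) 1))) := by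
  have hA0 : 0 < A := by linarith
  have hmeas : AEStronglyMeasurable (Function.uncurry fun (t u : ℝ) => ((u : ℂ) ^ (s - 1) * ((1 : ℂ) - (u : ℂ)) ^ (s - 1)) *
      ((A - u + A * t ^ 2 : ℝ) : ℂ) ^ (-s)) (volume.prod (volume.restrict (Set.Ioo (0:ℝ) 1))) := by
    apply Measurable.aestronglyMeasurable
    unfold Function.uncurry
    fun_prop
  have hnorm : ∀ u ∈ Set.Ioo (0:ℝ) 1, ∀ t : ℝ, ‖((u : ℂ) ^ (s - 1) * ((1 : ℂ) - (u : ℂ)) ^ (s - 1)) *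
      ((A - u + A * t ^ 2 : ℝ) : ℂ) ^ (-s)‖ =
      ‖((u : ℂ) ^ (s - 1) * ((1 : ℂ) - (u : ℂ)) ^ (s - 1))‖ * (A - u + A * t ^ 2) ^ (-s.re) := by
    intro u hu t
    have h1 : 0 < A - u := by linarith [hu.2]
    rw [norm_mul, Complex.norm_cpow_eq_rpow_re_of_pos (by positivity), Complex.neg_re]
  rw [integrable_prod_iff' hmeas]
  simp only [Function.uncurry]
  constructor
  · refine (ae_restrict_iff' measurableSet_Ioo).2 (Filter.Eventually.of_forall fun u hu => ?_)
    have h1 : 0 < A - u := by linarith [hu.2]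
    apply Integrable.const_mul
    refine (integrable_norm_iff ?_).1 ?_
    · apply Measurable.aestronglyMeasurable
      fun_prop
    · refine (inner_intble_real s.re (A - u) A hs h1 hA0).congr (Filter.Eventually.of_forall fun t => ?_)
      simp only
      rw [Complex.norm_cpow_eq_rpow_re_of_pos (by positivity), Complex.neg_re]
  · have hb := (beta_intble s (1 / 2) (by linarith) (by norm_num)).norm.mul_const
      ((Real.sqrt A)⁻¹ * ∫ t : ℝ, (1 + t ^ 2) ^ (-s.re))
    refine hb.mono' (hmeas.norm.prod_swap.integral_prod_right') ?_
    refine (ae_restrict_iff' measurableSet_Ioo).2 (Filter.Eventually.of_forall fun u hu => ?_)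
    have h1 : 0 < A - u := by linarith [hu.2]
    have h2 : 0 < 1 - u := by linarith [hu.2]
    have hI : 0 ≤ ∫ t : ℝ, (1 + t ^ 2) ^ (-s.re) := integral_nonneg fun t => by positivity
    rw [Real.norm_of_nonneg (integral_nonneg fun t => norm_nonneg _)]
    simp_rw [hnorm u hu]
    rw [integral_const_mul, inner_scale_real _ _ _ h1 hA0, mul_assoc ((A - u) ^ _), ← mul_assoc]
    refine mul_le_mul_of_nonneg_right ?_ (by positivity)
    rw [norm_mul, norm_mul, mul_assoc]
    refine mul_le_mul_of_nonneg_left ?_ (norm_nonneg _)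
    rw [show (1 : ℂ) - (u : ℂ) = ((1 - u : ℝ) : ℂ) by push_cast; rfl,
      Complex.norm_cpow_eq_rpow_re_of_pos h2, Complex.norm_cpow_eq_rpow_re_of_pos h2]
    calc (1 - u) ^ (s - 1).re * (A - u) ^ (1 / 2 - s.re)
        ≤ (1 - u) ^ (s - 1).re * (1 - u) ^ (1 / 2 - s.re) := by
          refine mul_le_mul_of_nonneg_left ?_ (by positivity)
          exact Real.rpow_le_rpow_of_nonpos h2 (by linarith) (by linarith)
      _ = _ := by
          rw [← Real.rpow_add h2]
          congr 1; norm_num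

/-- Patterson's integral formula (equation (A.5) of the paper):  for `Re s > 1/2` and
`κ > 0`, `(2s-1) ∫_{-∞}^∞ g_s((1+t²)(1+κ)²/(4κ)) dt = max(κ,κ⁻¹)^{1/2-s}/(κ^{1/2}+κ^{-1/2})`. -/
theorem integral_greenH_eq (s : ℂ) (hs : 1 / 2 < s.re) (κ : ℝ) (hκ : 0 < κ) :
    (2 * s - 1) * ∫ t : ℝ, greenH s ((1 + t ^ 2) * (1 + κ) ^ 2 / (4 * κ)) =
      ((max κ κ⁻¹ : ℝ) : ℂ) ^ (1 / 2 - s) /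
        (((Real.sqrt κ : ℝ) : ℂ) + ((Real.sqrt κ⁻¹ : ℝ) : ℂ)) := by
  obtain ⟨x, hx0, hx1, hxA, hxm⟩ : ∃ x : ℝ, 0 < x ∧ x ≤ 1 ∧
      (1 + κ) ^ 2 / (4 * κ) = (1 + x) ^ 2 / (4 * x) ∧ max κ κ⁻¹ = x⁻¹ := by
    rcases le_total κ 1 with h | h
    · exact ⟨κ, hκ, h, rfl, max_eq_right (h.trans ((one_le_inv₀ hκ).2 h))⟩
    · refine ⟨κ⁻¹, by positivity, inv_le_one_of_one_le₀ h, by field_simp; ring, ?_⟩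
      rw [inv_inv]
      exact max_eq_left ((inv_le_one_of_one_le₀ h).trans h)
  set A : ℝ := (1 + κ) ^ 2 / (4 * κ) with hAdef
  have hA : 1 ≤ A := by
    rw [hAdef, le_div_iff₀ (by positivity)]; nlinarith [sq_nonneg (1 - κ)]
  have hA0 : 0 < A := by linarith
  have hsqrt : Real.sqrt A = (Real.sqrt κ + Real.sqrt κ⁻¹) / 2 := by
    rw [Real.sqrt_eq_iff_mul_self_eq hA0.le (by positivity), Real.sqrt_inv]
    have h1 := Real.sq_sqrt hκ.le
    have h2 := Real.sqrt_pos.2 hκ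
    have key : ∀ q : ℝ, 0 < q → (1 + q ^ 2) ^ 2 / (4 * q ^ 2) = (q + q⁻¹) / 2 * ((q + q⁻¹) / 2) := by
      intro q hq
      field_simp
      ring
    have h3 := key _ h2
    rw [h1] at h3
    linarith
  have hg : ∀ t : ℝ, greenH s ((1 + t ^ 2) * (1 + κ) ^ 2 / (4 * κ)) =
      (1 / (4 * (Real.pi : ℂ))) * ∫ u in Set.Ioo (0:ℝ) 1,
        ((u : ℂ) ^ (s - 1) * ((1 : ℂ) - (u : ℂ)) ^ (s - 1)) *
      ((A - u + A * t ^ 2 : ℝ) : ℂ) ^ (-s) := by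
    intro t
    have : (1 + t ^ 2) * (1 + κ) ^ 2 / (4 * κ) = A + A * t ^ 2 := by rw [hAdef]; ring
    rw [greenH, this]
    congr 2
    ext u
    congr 2
    push_cast; ring
  simp_rw [hg]
  rw [integral_const_mul, integral_integral_swap (fubini_intble s hs A hA)]
  have hin : ∀ u ∈ Set.Ioo (0:ℝ) 1, (∫ t : ℝ, ((u : ℂ) ^ (s - 1) * ((1 : ℂ) - (u : ℂ)) ^ (s - 1)) *
      ((A - u + A * t ^ 2 : ℝ) : ℂ) ^ (-s)) =
      (((u : ℂ) ^ (s - 1) * ((1 : ℂ) - (u : ℂ)) ^ (s - 1)) *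
        ((A - u : ℝ) : ℂ) ^ (1 / 2 - s)) * (((Real.sqrt A)⁻¹ : ℝ) * ((4 : ℂ) ^ (s - 1) *
        Complex.betaIntegral (s - 1 / 2) (s - 1 / 2))) := by
    intro u hu
    rw [integral_const_mul, inner_scale _ _ _ (by linarith [hu.2]) hA0, C_eq]
    ring
  rw [setIntegral_congr_fun measurableSet_Ioo hin, integral_mul_const, hxA,
    J_all s (by linarith) x hx0 hx1, ← hxA, hxm, Complex.ofReal_mul,
    Complex.mul_cpow_ofReal_nonneg (by norm_num) hx0.le, hsqrt]
  have hxx : ((x⁻¹ : ℝ) : ℂ) ^ (1 / 2 - s) = (x : ℂ) ^ (s - 1 / 2) := by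
    rw [cpow_pos_eq _ (by positivity), cpow_pos_eq _ hx0, Real.log_inv]
    congr 1; push_cast; ring
  rw [hxx]
  have hc := const_eq s hs
  have hne : ((Real.sqrt κ : ℝ) : ℂ) + ((Real.sqrt κ⁻¹ : ℝ) : ℂ) ≠ 0 := by
    rw [← Complex.ofReal_add]
    have : 0 < Real.sqrt κ + Real.sqrt κ⁻¹ := by positivity
    exact_mod_cast this.ne'
  have h2 : ((((Real.sqrt κ + Real.sqrt κ⁻¹) / 2)⁻¹ : ℝ) : ℂ) =
      2 / (((Real.sqrt κ : ℝ) : ℂ) + ((Real.sqrt κ⁻¹ : ℝ) : ℂ)) := by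
    push_cast; rw [inv_div]
  rw [h2, show ((4 : ℝ) : ℂ) = 4 by norm_num]
  linear_combination (2 * (x : ℂ) ^ (s - 1 / 2) /
    (((Real.sqrt κ : ℝ) : ℂ) + ((Real.sqrt κ⁻¹ : ℝ) : ℂ))) * hc
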